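/- On the set 𝓡, the best-response map BR is well-defined (in each of the eight component expressions the numerator and denominator never simultaneously vanish) and BR maps 𝓡 into 𝓡. -/

import Mathlib

/-!
Each `Ii` is nonnegative, and `Ii θ > 0` for `0 < θ ≤ π / 2`, because the sector `Ri θ` then contains
a nonempty open piece of the square, where `f` is positive almost everywhere
(`IsNiceDensity.setIntegral_pos`).
In the same way the four half-square masses are positive, so `K1, K2, L1, L2 > 0` and `θmin > 0`.
The constraints defining `RSet` hence say that in each opposite pair `(I1, I3)`, `(I2, I4)`,
`(I5, I7)`, `(I6, I8)` one member is positive (`pair_pos`).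

*Well-definedness.* A numerator and its denominator together contain both members of some
opposite pair, so they cannot vanish together.

*Invariance.* The integral factors of two opposite components of `BR` have the form
`(x + a) / (a + y)` and `(b + y) / (b + x)`. In one of them the numerator dominates the
denominator, according to whether `y ≤ x` or `x ≤ y`, so the corresponding component is at least the arctangent of one
of the eight ratios in `Qmin` (`le_BRcomp_add`).
-/

open MeasureTheory Real Set

noncomputable section

/-- The square `[-1,1]²`. -/
def Sq : Set (ℝ × ℝ) := Set.Icc (-1 : ℝ) 1 ×ˢ Set.Icc (-1 : ℝ) 1

/-- A probability density supported on `[-1,1]²`, continuous and positive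
almost everywhere on the square. -/
structure IsNiceDensity (f : ℝ × ℝ → ℝ) : Prop where
  nonneg : ∀ p, 0 ≤ f p
  vanish : ∀ p ∉ Sq, f p = 0
  total : (∫ p in Sq, f p) = 1
  cont : ContinuousOn f Sq
  pos_ae : ∀ᵐ p ∂(volume.restrict Sq), 0 < f p

/-- Region `R1(θ) = {0 < x ≤ 1, 0 < y < x·tan θ}`; for `θ = π/2` it is the full
open quadrant. -/
def R1 (θ : ℝ) : Set (ℝ × ℝ) :=
  {p | 0 < p.1 ∧ p.1 ≤ 1 ∧ 0 < p.2 ∧ (θ = π / 2 ∨ p.2 < p.1 * tan θ)}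

def R2 (θ : ℝ) : Set (ℝ × ℝ) :=
  {p | -1 ≤ p.1 ∧ p.1 < 0 ∧ 0 < p.2 ∧ (θ = π / 2 ∨ p.2 < -p.1 * tan θ)}

def R3 (θ : ℝ) : Set (ℝ × ℝ) :=
  {p | -1 ≤ p.1 ∧ p.1 < 0 ∧ 0 < -p.2 ∧ (θ = π / 2 ∨ -p.2 < -p.1 * tan θ)}

def R4 (θ : ℝ) : Set (ℝ × ℝ) :=
  {p | 0 < p.1 ∧ p.1 ≤ 1 ∧ 0 < -p.2 ∧ (θ = π / 2 ∨ -p.2 < p.1 * tan θ)}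

def R5 (θ : ℝ) : Set (ℝ × ℝ) :=
  {p | 0 < p.2 ∧ p.2 ≤ 1 ∧ 0 < p.1 ∧ (θ = π / 2 ∨ p.1 < p.2 * tan θ)}

def R6 (θ : ℝ) : Set (ℝ × ℝ) :=
  {p | 0 < p.2 ∧ p.2 ≤ 1 ∧ 0 < -p.1 ∧ (θ = π / 2 ∨ -p.1 < p.2 * tan θ)}

def R7 (θ : ℝ) : Set (ℝ × ℝ) :=
  {p | -1 ≤ p.2 ∧ p.2 < 0 ∧ 0 < -p.1 ∧ (θ = π / 2 ∨ -p.1 < -p.2 * tan θ)}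

def R8 (θ : ℝ) : Set (ℝ × ℝ) :=
  {p | -1 ≤ p.2 ∧ p.2 < 0 ∧ 0 < p.1 ∧ (θ = π / 2 ∨ p.1 < -p.2 * tan θ)}

def I1 (f : ℝ × ℝ → ℝ) (θ : ℝ) : ℝ := ∫ p in R1 θ, f p
def I2 (f : ℝ × ℝ → ℝ) (θ : ℝ) : ℝ := ∫ p in R2 θ, f p
def I3 (f : ℝ × ℝ → ℝ) (θ : ℝ) : ℝ := ∫ p in R3 θ, f p
def I4 (f : ℝ × ℝ → ℝ) (θ : ℝ) : ℝ := ∫ p in R4 θ, f p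
def I5 (f : ℝ × ℝ → ℝ) (θ : ℝ) : ℝ := ∫ p in R5 θ, f p
def I6 (f : ℝ × ℝ → ℝ) (θ : ℝ) : ℝ := ∫ p in R6 θ, f p
def I7 (f : ℝ × ℝ → ℝ) (θ : ℝ) : ℝ := ∫ p in R7 θ, f p
def I8 (f : ℝ × ℝ → ℝ) (θ : ℝ) : ℝ := ∫ p in R8 θ, f p

def Q1p (f : ℝ × ℝ → ℝ) : ℝ := ∫ p in {p ∈ Sq | 0 < p.1}, f p
def Q1m (f : ℝ × ℝ → ℝ) : ℝ := ∫ p in {p ∈ Sq | p.1 < 0}, f p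
def Q2p (f : ℝ × ℝ → ℝ) : ℝ := ∫ p in {p ∈ Sq | 0 < p.2}, f p
def Q2m (f : ℝ × ℝ → ℝ) : ℝ := ∫ p in {p ∈ Sq | p.2 < 0}, f p

def K1 (f : ℝ × ℝ → ℝ) (n : ℕ) : ℝ := Q1m f ^ ((n - 1) / 2) * Q1p f ^ ((n - 3) / 2)
def K2 (f : ℝ × ℝ → ℝ) (n : ℕ) : ℝ := Q1m f ^ ((n - 3) / 2) * Q1p f ^ ((n - 1) / 2)
def L1 (f : ℝ × ℝ → ℝ) (n : ℕ) : ℝ := Q2m f ^ ((n - 3) / 2) * Q2p f ^ ((n - 1) / 2)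
def L2 (f : ℝ × ℝ → ℝ) (n : ℕ) : ℝ := Q2m f ^ ((n - 1) / 2) * Q2p f ^ ((n - 3) / 2)

/-- One equation of the equilibrium system: if the denominator is nonzero then
`θ = arctan (num / den)`; if the denominator is zero and the numerator positive then
`θ = π/2`; if both vanish, no constraint is imposed. -/
def EqnHolds (θ num den : ℝ) : Prop :=
  if den = 0 then (num = 0 ∨ θ = π / 2) else θ = arctan (num / den)

/-- The equilibrium system of the vote-trading game. -/
def EqSys (f : ℝ × ℝ → ℝ) (n : ℕ) (θ1 θ2 θ3 θ4 θ5 θ6 θ7 θ8 : ℝ) : Prop :=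
  EqnHolds θ1 ((I6 f θ6 + I7 f θ7) * K1 f n) ((I7 f θ7 + I8 f θ8) * L1 f n) ∧
  EqnHolds θ2 ((I5 f θ5 + I8 f θ8) * K2 f n) ((I7 f θ7 + I8 f θ8) * L1 f n) ∧
  EqnHolds θ3 ((I5 f θ5 + I8 f θ8) * K2 f n) ((I5 f θ5 + I6 f θ6) * L2 f n) ∧
  EqnHolds θ4 ((I6 f θ6 + I7 f θ7) * K1 f n) ((I5 f θ5 + I6 f θ6) * L2 f n) ∧
  EqnHolds θ5 ((I3 f θ3 + I4 f θ4) * L2 f n) ((I2 f θ2 + I3 f θ3) * K2 f n) ∧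
  EqnHolds θ6 ((I3 f θ3 + I4 f θ4) * L2 f n) ((I1 f θ1 + I4 f θ4) * K1 f n) ∧
  EqnHolds θ7 ((I1 f θ1 + I2 f θ2) * L1 f n) ((I1 f θ1 + I4 f θ4) * K1 f n) ∧
  EqnHolds θ8 ((I1 f θ1 + I2 f θ2) * L1 f n) ((I2 f θ2 + I3 f θ3) * K2 f n)

/-- The minimum of the eight ratios `K1/L1, K2/L1, K2/L2, K1/L2, L2/K2, L2/K1, L1/K1, L1/K2`. -/
def Qmin (f : ℝ × ℝ → ℝ) (n : ℕ) : ℝ :=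
  min (min (min (K1 f n / L1 f n) (K2 f n / L1 f n)) (min (K2 f n / L2 f n) (K1 f n / L2 f n)))
    (min (min (L2 f n / K2 f n) (L2 f n / K1 f n)) (min (L1 f n / K1 f n) (L1 f n / K2 f n)))

def θmin (f : ℝ × ℝ → ℝ) (n : ℕ) : ℝ := arctan (Qmin f n)

/-- A single component of the best-response map: `arctan (num/den)`, read as `π/2`
when the denominator vanishes (and the numerator is positive). -/
def BRcomp (num den : ℝ) : ℝ := if den = 0 then π / 2 else arctan (num / den)

/-- The best-response map `BR : [0,π/2]⁸ → [0,π/2]⁸`; here the tuple coordinates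
`θ 0, …, θ 7` stand for `θ1, …, θ8`. -/
def BR (f : ℝ × ℝ → ℝ) (n : ℕ) (θ : Fin 8 → ℝ) : Fin 8 → ℝ :=
  ![BRcomp ((I6 f (θ 5) + I7 f (θ 6)) * K1 f n) ((I7 f (θ 6) + I8 f (θ 7)) * L1 f n),
    BRcomp ((I5 f (θ 4) + I8 f (θ 7)) * K2 f n) ((I7 f (θ 6) + I8 f (θ 7)) * L1 f n),
    BRcomp ((I5 f (θ 4) + I8 f (θ 7)) * K2 f n) ((I5 f (θ 4) + I6 f (θ 5)) * L2 f n),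
    BRcomp ((I6 f (θ 5) + I7 f (θ 6)) * K1 f n) ((I5 f (θ 4) + I6 f (θ 5)) * L2 f n),
    BRcomp ((I3 f (θ 2) + I4 f (θ 3)) * L2 f n) ((I2 f (θ 1) + I3 f (θ 2)) * K2 f n),
    BRcomp ((I3 f (θ 2) + I4 f (θ 3)) * L2 f n) ((I1 f (θ 0) + I4 f (θ 3)) * K1 f n),
    BRcomp ((I1 f (θ 0) + I2 f (θ 1)) * L1 f n) ((I1 f (θ 0) + I4 f (θ 3)) * K1 f n),
    BRcomp ((I1 f (θ 0) + I2 f (θ 1)) * L1 f n) ((I2 f (θ 1) + I3 f (θ 2)) * K2 f n)]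

/-- The set `𝓡 ⊆ [0,π/2]⁸` on which the best response map is studied. -/
def RSet (f : ℝ × ℝ → ℝ) (n : ℕ) : Set (Fin 8 → ℝ) :=
  {θ | (∀ i, θ i ∈ Set.Icc (0 : ℝ) (π / 2)) ∧
    θmin f n ≤ θ 0 + θ 2 ∧ θmin f n ≤ θ 1 + θ 3 ∧
    θmin f n ≤ θ 4 + θ 6 ∧ θmin f n ≤ θ 5 + θ 7}

/-! ### Positivity of the integrals -/

lemma IsNiceDensity.integrable {f : ℝ × ℝ → ℝ} (hf : IsNiceDensity f) : Integrable f := by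
  have h1 : IntegrableOn f Sq := hf.cont.integrableOn_compact (isCompact_Icc.prod isCompact_Icc)
  exact (integrableOn_iff_integrable_of_support_subset
    (fun p hp => by_contra fun h => hp (hf.vanish p h))).1 h1

lemma IsNiceDensity.setIntegral_nonneg {f : ℝ × ℝ → ℝ} (hf : IsNiceDensity f)
    (S : Set (ℝ × ℝ)) : 0 ≤ ∫ p in S, f p :=
  integral_nonneg hf.nonneg

lemma IsNiceDensity.setIntegral_pos {f : ℝ × ℝ → ℝ} (hf : IsNiceDensity f)
    {U S : Set (ℝ × ℝ)} (hU : IsOpen U) (hne : U.Nonempty) (hUSq : U ⊆ Sq) (hUS : U ⊆ S) :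
    0 < ∫ p in S, f p := by
  have hle : ∫ p in U, f p ≤ ∫ p in S, f p :=
    setIntegral_mono_set hf.integrable.integrableOn (Filter.Eventually.of_forall hf.nonneg)
      (LE.le.eventuallyLE hUS)
  refine lt_of_lt_of_le ?_ hle
  have hpos : ∀ᵐ p ∂(volume.restrict U), 0 < f p :=
    ae_mono (Measure.restrict_mono hUSq le_rfl) hf.pos_ae
  refine lt_of_le_of_ne (hf.setIntegral_nonneg U) fun h0 => ?_
  have hz := (integral_eq_zero_iff_of_nonneg hf.nonneg hf.integrable.integrableOn).1 h0.symm
  have hF : ∀ᵐ p ∂(volume.restrict U), False := by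
    filter_upwards [hpos, hz] with p h1 h2
    exact h1.ne' h2
  have hm : volume.restrict U = 0 := by simpa [Filter.eventually_false_iff_eq_bot] using hF
  exact (hU.measure_pos volume hne).ne' (by simpa using hm)

/-- A set containing, within the open unit square of the quadrant of signs `(a, b)`, all points of
an open set `W` meeting that square carries positive mass. -/
lemma IsNiceDensity.pos_of_open {f : ℝ × ℝ → ℝ} (hf : IsNiceDensity f) {S W : Set (ℝ × ℝ)}
    {a b : ℝ} (ha : a = 1 ∨ a = -1) (hb : b = 1 ∨ b = -1) (hW : IsOpen W)
    {u v : ℝ} (hu0 : 0 < u) (hu1 : u < 1) (hv0 : 0 < v) (hv1 : v < 1) (huv : (a * u, b * v) ∈ W)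
    (hS : ∀ p ∈ W, 0 < a * p.1 → a * p.1 < 1 → 0 < b * p.2 → b * p.2 < 1 → p ∈ S) :
    0 < ∫ p in S, f p := by
  have haa : a * a = 1 := by rcases ha with rfl | rfl <;> norm_num
  have hbb : b * b = 1 := by rcases hb with rfl | rfl <;> norm_num
  refine hf.setIntegral_pos (U := W ∩ {p : ℝ × ℝ | 0 < a * p.1 ∧ a * p.1 < 1 ∧ 0 < b * p.2 ∧
    b * p.2 < 1}) (hW.inter ?_) ⟨(a * u, b * v), huv, ?_⟩ ?_ ?_
  · refine .and ?_ (.and ?_ (.and ?_ ?_)) <;> exact isOpen_lt (by fun_prop) (by fun_prop)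
  · simp only [mem_ofPred_eq, ← mul_assoc, haa, hbb, one_mul]
    exact ⟨hu0, hu1, hv0, hv1⟩
  · rintro ⟨x, y⟩ ⟨-, h1, h2, h3, h4⟩
    simp only [Sq, mem_prod, mem_Icc]
    dsimp only at h1 h2 h3 h4
    rcases ha with rfl | rfl <;> rcases hb with rfl | rfl <;>
      refine ⟨⟨?_, ?_⟩, ?_, ?_⟩ <;> linarith
  · rintro p ⟨hp, h1, h2, h3, h4⟩
    exact hS p hp h1 h2 h3 h4

/-- The case of the sector `0 < |y| < c |x|`. -/
lemma IsNiceDensity.pos_of_sector {f : ℝ × ℝ → ℝ} (hf : IsNiceDensity f) {S : Set (ℝ × ℝ)}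
    (a b : ℝ) (ha : a = 1 ∨ a = -1) (hb : b = 1 ∨ b = -1) (c : ℝ) (hc : 0 < c)
    (hS : ∀ p : ℝ × ℝ, 0 < a * p.1 → a * p.1 < 1 → 0 < b * p.2 → b * p.2 < 1 →
      b * p.2 < a * p.1 * c → p ∈ S) : 0 < ∫ p in S, f p := by
  have hm1 : 0 < min 1 (c / 2) := by positivity
  have hm2 := min_le_left 1 (c / 2)
  have hm3 := min_le_right 1 (c / 2)
  have haa : a * a = 1 := by rcases ha with rfl | rfl <;> norm_num
  have hbb : b * b = 1 := by rcases hb with rfl | rfl <;> norm_num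
  refine hf.pos_of_open (W := {p : ℝ × ℝ | b * p.2 < a * p.1 * c}) ha hb
    (isOpen_lt (by fun_prop) (by fun_prop)) (u := 1 / 2) (v := min 1 (c / 2) / 2)
    (by linarith) (by linarith) (by linarith) (by linarith) ?_
    (fun p h h1 h2 h3 h4 => hS p h1 h2 h3 h4 h)
  simp only [mem_ofPred_eq, ← mul_assoc, haa, hbb, one_mul]
  linarith

/-- The case of the sector `0 < |x| < c |y|`. -/
lemma IsNiceDensity.pos_of_sector' {f : ℝ × ℝ → ℝ} (hf : IsNiceDensity f) {S : Set (ℝ × ℝ)}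
    (a b : ℝ) (ha : a = 1 ∨ a = -1) (hb : b = 1 ∨ b = -1) (c : ℝ) (hc : 0 < c)
    (hS : ∀ p : ℝ × ℝ, 0 < a * p.1 → a * p.1 < 1 → 0 < b * p.2 → b * p.2 < 1 →
      a * p.1 < b * p.2 * c → p ∈ S) : 0 < ∫ p in S, f p := by
  have hm1 : 0 < min 1 (c / 2) := by positivity
  have hm2 := min_le_left 1 (c / 2)
  have hm3 := min_le_right 1 (c / 2)
  have haa : a * a = 1 := by rcases ha with rfl | rfl <;> norm_num
  have hbb : b * b = 1 := by rcases hb with rfl | rfl <;> norm_num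
  refine hf.pos_of_open (W := {p : ℝ × ℝ | a * p.1 < b * p.2 * c}) ha hb
    (isOpen_lt (by fun_prop) (by fun_prop)) (u := min 1 (c / 2) / 2) (v := 1 / 2)
    (by linarith) (by linarith) (by linarith) (by linarith) ?_
    (fun p h h1 h2 h3 h4 => hS p h1 h2 h3 h4 h)
  simp only [mem_ofPred_eq, ← mul_assoc, haa, hbb, one_mul]
  linarith

/-- A slope `c` valid for all the regions `Ri θ`; at `θ = π / 2`, where `tan θ` has
the junk value `0`, any slope will do. -/
lemma exists_slope {θ : ℝ} (h0 : 0 < θ) (h1 : θ ≤ π / 2) :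
    ∃ c : ℝ, 0 < c ∧ ∀ u v : ℝ, v < u * c → θ = π / 2 ∨ v < u * tan θ := by
  rcases eq_or_lt_of_le h1 with h | h
  · exact ⟨1, one_pos, fun _ _ _ => .inl h⟩
  · exact ⟨tan θ, tan_pos_of_pos_of_lt_pi_div_two h0 h, fun _ _ h => .inr h⟩

lemma I1_pos {f : ℝ × ℝ → ℝ} (hf : IsNiceDensity f) {θ : ℝ} (h0 : 0 < θ) (h1 : θ ≤ π / 2) :
    0 < I1 f θ := by
  obtain ⟨c, hc, h⟩ := exists_slope h0 h1
  exact hf.pos_of_sector 1 1 (by simp) (by simp) c hc fun p h1 h2 h3 h4 h5 =>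
    ⟨by linarith, by linarith, by linarith, h _ _ (by linarith)⟩

lemma I2_pos {f : ℝ × ℝ → ℝ} (hf : IsNiceDensity f) {θ : ℝ} (h0 : 0 < θ) (h1 : θ ≤ π / 2) :
    0 < I2 f θ := by
  obtain ⟨c, hc, h⟩ := exists_slope h0 h1
  exact hf.pos_of_sector (-1) 1 (by simp) (by simp) c hc fun p h1 h2 h3 h4 h5 =>
    ⟨by linarith, by linarith, by linarith, h _ _ (by linarith)⟩

lemma I3_pos {f : ℝ × ℝ → ℝ} (hf : IsNiceDensity f) {θ : ℝ} (h0 : 0 < θ) (h1 : θ ≤ π / 2) :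
    0 < I3 f θ := by
  obtain ⟨c, hc, h⟩ := exists_slope h0 h1
  exact hf.pos_of_sector (-1) (-1) (by simp) (by simp) c hc fun p h1 h2 h3 h4 h5 =>
    ⟨by linarith, by linarith, by linarith, h _ _ (by linarith)⟩

lemma I4_pos {f : ℝ × ℝ → ℝ} (hf : IsNiceDensity f) {θ : ℝ} (h0 : 0 < θ) (h1 : θ ≤ π / 2) :
    0 < I4 f θ := by
  obtain ⟨c, hc, h⟩ := exists_slope h0 h1
  exact hf.pos_of_sector 1 (-1) (by simp) (by simp) c hc fun p h1 h2 h3 h4 h5 =>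
    ⟨by linarith, by linarith, by linarith, h _ _ (by linarith)⟩

lemma I5_pos {f : ℝ × ℝ → ℝ} (hf : IsNiceDensity f) {θ : ℝ} (h0 : 0 < θ) (h1 : θ ≤ π / 2) :
    0 < I5 f θ := by
  obtain ⟨c, hc, h⟩ := exists_slope h0 h1
  exact hf.pos_of_sector' 1 1 (by simp) (by simp) c hc fun p h1 h2 h3 h4 h5 =>
    ⟨by linarith, by linarith, by linarith, h _ _ (by linarith)⟩

lemma I6_pos {f : ℝ × ℝ → ℝ} (hf : IsNiceDensity f) {θ : ℝ} (h0 : 0 < θ) (h1 : θ ≤ π / 2) :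
    0 < I6 f θ := by
  obtain ⟨c, hc, h⟩ := exists_slope h0 h1
  exact hf.pos_of_sector' (-1) 1 (by simp) (by simp) c hc fun p h1 h2 h3 h4 h5 =>
    ⟨by linarith, by linarith, by linarith, h _ _ (by linarith)⟩

lemma I7_pos {f : ℝ × ℝ → ℝ} (hf : IsNiceDensity f) {θ : ℝ} (h0 : 0 < θ) (h1 : θ ≤ π / 2) :
    0 < I7 f θ := by
  obtain ⟨c, hc, h⟩ := exists_slope h0 h1
  exact hf.pos_of_sector' (-1) (-1) (by simp) (by simp) c hc fun p h1 h2 h3 h4 h5 =>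
    ⟨by linarith, by linarith, by linarith, h _ _ (by linarith)⟩

lemma I8_pos {f : ℝ × ℝ → ℝ} (hf : IsNiceDensity f) {θ : ℝ} (h0 : 0 < θ) (h1 : θ ≤ π / 2) :
    0 < I8 f θ := by
  obtain ⟨c, hc, h⟩ := exists_slope h0 h1
  exact hf.pos_of_sector' 1 (-1) (by simp) (by simp) c hc fun p h1 h2 h3 h4 h5 =>
    ⟨by linarith, by linarith, by linarith, h _ _ (by linarith)⟩

lemma Q1p_pos {f : ℝ × ℝ → ℝ} (hf : IsNiceDensity f) : 0 < Q1p f :=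
  hf.pos_of_open (a := 1) (b := 1) (u := 1 / 2) (v := 1 / 2) (by simp) (by simp) isOpen_univ
    (by norm_num) (by norm_num) (by norm_num) (by norm_num) (mem_univ _) fun p _ h1 h2 h3 h4 =>
    ⟨⟨⟨by linarith, by linarith⟩, by linarith, by linarith⟩, by linarith⟩

lemma Q1m_pos {f : ℝ × ℝ → ℝ} (hf : IsNiceDensity f) : 0 < Q1m f :=
  hf.pos_of_open (a := -1) (b := 1) (u := 1 / 2) (v := 1 / 2) (by simp) (by simp) isOpen_univ
    (by norm_num) (by norm_num) (by norm_num) (by norm_num) (mem_univ _) fun p _ h1 h2 h3 h4 =>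
    ⟨⟨⟨by linarith, by linarith⟩, by linarith, by linarith⟩, by linarith⟩

lemma Q2p_pos {f : ℝ × ℝ → ℝ} (hf : IsNiceDensity f) : 0 < Q2p f :=
  hf.pos_of_open (a := 1) (b := 1) (u := 1 / 2) (v := 1 / 2) (by simp) (by simp) isOpen_univ
    (by norm_num) (by norm_num) (by norm_num) (by norm_num) (mem_univ _) fun p _ h1 h2 h3 h4 =>
    ⟨⟨⟨by linarith, by linarith⟩, by linarith, by linarith⟩, by linarith⟩

lemma Q2m_pos {f : ℝ × ℝ → ℝ} (hf : IsNiceDensity f) : 0 < Q2m f :=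
  hf.pos_of_open (a := 1) (b := -1) (u := 1 / 2) (v := 1 / 2) (by simp) (by simp) isOpen_univ
    (by norm_num) (by norm_num) (by norm_num) (by norm_num) (mem_univ _) fun p _ h1 h2 h3 h4 =>
    ⟨⟨⟨by linarith, by linarith⟩, by linarith, by linarith⟩, by linarith⟩

/-! ### Arctangent estimates -/

/-- If the members of a pair of nonnegative quantities are positive at positive angles in
`[0, π / 2]`, and the angles have sum at least `t > 0`, then one of the quantities is positive. -/
lemma pair_pos {I J : ℝ → ℝ} (hI : ∀ θ, 0 ≤ I θ) (hJ : ∀ θ, 0 ≤ J θ)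
    (hI' : ∀ θ, 0 < θ → θ ≤ π / 2 → 0 < I θ) (hJ' : ∀ θ, 0 < θ → θ ≤ π / 2 → 0 < J θ)
    {s t m : ℝ} (hs : s ≤ π / 2) (ht : t ≤ π / 2) (hm : 0 < m) (h : m ≤ s + t) :
    0 < I s + J t := by
  by_cases hs0 : 0 < s
  · have := hI' s hs0 hs
    have := hJ t
    linarith
  · have := hJ' t (by linarith) ht
    have := hI s
    linarith

lemma BRcomp_mem {x y : ℝ} (hx : 0 ≤ x) (hy : 0 ≤ y) : BRcomp x y ∈ Icc 0 (π / 2) := by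
  unfold BRcomp
  split_ifs
  · exact ⟨by positivity, le_rfl⟩
  · exact ⟨arctan_nonneg.2 (by positivity), (arctan_lt_pi_div_two _).le⟩

lemma le_BRcomp {N D K L m : ℝ} (hD : 0 ≤ D) (hND : D ≤ N) (hK : 0 < K) (hL : 0 < L)
    (hm : m ≤ K / L) : arctan m ≤ BRcomp (N * K) (D * L) := by
  unfold BRcomp
  split_ifs with h
  · exact (arctan_lt_pi_div_two _).le
  · have hD' : 0 < D := hD.lt_of_ne fun h' => h (by simp [← h'])
    refine arctan_strictMono.monotone (hm.trans ?_)
    rw [div_le_div_iff₀ hL (by positivity)]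
    nlinarith [mul_le_mul_of_nonneg_right hND (mul_pos hK hL).le]

/-- Two opposite components of the best response: the integral factors of the numerators and
denominators differ only by `x` and `y`, in opposite order, so in one of the two the
numerator dominates the denominator (which may vanish; the component is then `π / 2`). -/
lemma le_BRcomp_add {N D N' D' x y K L K' L' m : ℝ} (hN : 0 ≤ N) (hD : 0 ≤ D) (hN' : 0 ≤ N')
    (hD' : 0 ≤ D') (h : N - D = x - y) (h' : N' - D' = y - x) (hK : 0 < K) (hL : 0 < L)
    (hK' : 0 < K') (hL' : 0 < L') (hm : m ≤ K / L) (hm' : m ≤ K' / L') :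
    arctan m ≤ BRcomp (N * K) (D * L) + BRcomp (N' * K') (D' * L') := by
  have h1 := (BRcomp_mem (mul_nonneg hN hK.le) (mul_nonneg hD hL.le)).1
  have h2 := (BRcomp_mem (mul_nonneg hN' hK'.le) (mul_nonneg hD' hL'.le)).1
  rcases le_total y x with hxy | hxy
  · have := le_BRcomp hD (by linarith : D ≤ N) hK hL hm
    linarith
  · have := le_BRcomp hD' (by linarith : D' ≤ N') hK' hL' hm'
    linarith

lemma not_both_zero {N D K L : ℝ} (hK : 0 < K) (hL : 0 < L) (h : 0 < N + D) :
    ¬(N * K = 0 ∧ D * L = 0) := by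
  rintro ⟨h1, h2⟩
  have h3 := (mul_eq_zero.1 h1).resolve_right hK.ne'
  have h4 := (mul_eq_zero.1 h2).resolve_right hL.ne'
  linarith

/-! ### The invariant set -/

/-- On `𝓡` the best-response map is well defined (in each component
the numerator and denominator never vanish simultaneously) and `BR` maps `𝓡` into `𝓡`. -/
theorem BR_well_defined_and_maps_to_self (n : ℕ) (hodd : Odd n) (hn : 3 ≤ n)
    (f : ℝ × ℝ → ℝ) (hf : IsNiceDensity f) :
    ∀ θ ∈ RSet f n,
      (¬((I6 f (θ 5) + I7 f (θ 6)) * K1 f n = 0 ∧ (I7 f (θ 6) + I8 f (θ 7)) * L1 f n = 0) ∧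
       ¬((I5 f (θ 4) + I8 f (θ 7)) * K2 f n = 0 ∧ (I7 f (θ 6) + I8 f (θ 7)) * L1 f n = 0) ∧
       ¬((I5 f (θ 4) + I8 f (θ 7)) * K2 f n = 0 ∧ (I5 f (θ 4) + I6 f (θ 5)) * L2 f n = 0) ∧
       ¬((I6 f (θ 5) + I7 f (θ 6)) * K1 f n = 0 ∧ (I5 f (θ 4) + I6 f (θ 5)) * L2 f n = 0) ∧
       ¬((I3 f (θ 2) + I4 f (θ 3)) * L2 f n = 0 ∧ (I2 f (θ 1) + I3 f (θ 2)) * K2 f n = 0) ∧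
       ¬((I3 f (θ 2) + I4 f (θ 3)) * L2 f n = 0 ∧ (I1 f (θ 0) + I4 f (θ 3)) * K1 f n = 0) ∧
       ¬((I1 f (θ 0) + I2 f (θ 1)) * L1 f n = 0 ∧ (I1 f (θ 0) + I4 f (θ 3)) * K1 f n = 0) ∧
       ¬((I1 f (θ 0) + I2 f (θ 1)) * L1 f n = 0 ∧ (I2 f (θ 1) + I3 f (θ 2)) * K2 f n = 0)) ∧
      BR f n θ ∈ RSet f n := by
  rintro θ ⟨hI, h02, h13, h46, h57⟩
  have hQ1p := Q1p_pos hf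
  have hQ1m := Q1m_pos hf
  have hQ2p := Q2p_pos hf
  have hQ2m := Q2m_pos hf
  have hK1 : 0 < K1 f n := by unfold K1; positivity
  have hK2 : 0 < K2 f n := by unfold K2; positivity
  have hL1 : 0 < L1 f n := by unfold L1; positivity
  have hL2 : 0 < L2 f n := by unfold L2; positivity
  have hQ : 0 < Qmin f n := by unfold Qmin; positivity
  have hθ : 0 < θmin f n := arctan_pos.2 hQ
  obtain ⟨⟨⟨q1, q2⟩, q3, q4⟩, ⟨q5, q6⟩, q7, q8⟩ :
      ((Qmin f n ≤ K1 f n / L1 f n ∧ Qmin f n ≤ K2 f n / L1 f n) ∧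
        (Qmin f n ≤ K2 f n / L2 f n ∧ Qmin f n ≤ K1 f n / L2 f n)) ∧
      ((Qmin f n ≤ L2 f n / K2 f n ∧ Qmin f n ≤ L2 f n / K1 f n) ∧
        (Qmin f n ≤ L1 f n / K1 f n ∧ Qmin f n ≤ L1 f n / K2 f n)) := by
    simp only [← le_min_iff]
    exact le_rfl
  have n1 : ∀ t, 0 ≤ I1 f t := fun _ => hf.setIntegral_nonneg _
  have n2 : ∀ t, 0 ≤ I2 f t := fun _ => hf.setIntegral_nonneg _
  have n3 : ∀ t, 0 ≤ I3 f t := fun _ => hf.setIntegral_nonneg _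
  have n4 : ∀ t, 0 ≤ I4 f t := fun _ => hf.setIntegral_nonneg _
  have n5 : ∀ t, 0 ≤ I5 f t := fun _ => hf.setIntegral_nonneg _
  have n6 : ∀ t, 0 ≤ I6 f t := fun _ => hf.setIntegral_nonneg _
  have n7 : ∀ t, 0 ≤ I7 f t := fun _ => hf.setIntegral_nonneg _
  have n8 : ∀ t, 0 ≤ I8 f t := fun _ => hf.setIntegral_nonneg _
  have p13 := pair_pos n1 n3 (fun _ => I1_pos hf) (fun _ => I3_pos hf) (hI 0).2 (hI 2).2 hθ h02
  have p24 := pair_pos n2 n4 (fun _ => I2_pos hf) (fun _ => I4_pos hf) (hI 1).2 (hI 3).2 hθ h13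
  have p57 := pair_pos n5 n7 (fun _ => I5_pos hf) (fun _ => I7_pos hf) (hI 4).2 (hI 6).2 hθ h46
  have p68 := pair_pos n6 n8 (fun _ => I6_pos hf) (fun _ => I8_pos hf) (hI 5).2 (hI 7).2 hθ h57
  replace n1 := n1 (θ 0)
  replace n2 := n2 (θ 1)
  replace n3 := n3 (θ 2)
  replace n4 := n4 (θ 3)
  replace n5 := n5 (θ 4)
  replace n6 := n6 (θ 5)
  replace n7 := n7 (θ 6)
  replace n8 := n8 (θ 7)
  refine ⟨⟨?_, ?_, ?_, ?_, ?_, ?_, ?_, ?_⟩, ?_, ?_, ?_, ?_, ?_⟩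
  iterate 8 exact not_both_zero (by assumption) (by assumption) (by linarith)
  · intro i
    fin_cases i <;> exact BRcomp_mem (by positivity) (by positivity)
  · exact le_BRcomp_add (x := I6 f (θ 5)) (y := I8 f (θ 7)) (by positivity) (by positivity)
      (by positivity) (by positivity) (by ring) (by ring) hK1 hL1 hK2 hL2 q1 q3
  · exact le_BRcomp_add (x := I5 f (θ 4)) (y := I7 f (θ 6)) (by positivity) (by positivity)
      (by positivity) (by positivity) (by ring) (by ring) hK2 hL1 hK1 hL2 q2 q4
  · exact le_BRcomp_add (x := I4 f (θ 3)) (y := I2 f (θ 1)) (by positivity) (by positivity)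
      (by positivity) (by positivity) (by ring) (by ring) hL2 hK2 hL1 hK1 q5 q7
  · exact le_BRcomp_add (x := I3 f (θ 2)) (y := I1 f (θ 0)) (by positivity) (by positivity)
      (by positivity) (by positivity) (by ring) (by ring) hL2 hK1 hL1 hK2 q6 q8
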